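/- Let A be a set of permutations of the four-element index set {1,2,3,4}, and suppose the transposition (2,3) (exchanging the second and third indices) lies in the subgroup of the symmetric group on four elements generated by A. If a magma M satisfies, for every π in A, the identity (x_1*x_2)*(x_3*x_4) = (x_{π(1)}*x_{π(2)})*(x_{π(3)}*x_{π(4)}) for all x_1,x_2,x_3,x_4 in M, then M is medial. -/

import Mathlib

section InvarianceGroup

variable {ι α β : Type*}

/-- The invariance group of a function `f` of variables indexed by `ι`: the permutations of the
variables that leave `f` unchanged. A permutation `π` acts by precomposition, sending the
argument tuple `x` to `x ∘ π`. -/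
def invarianceGroup (f : (ι → α) → β) : Subgroup (Equiv.Perm ι) where
  carrier := {π | ∀ x, f (x ∘ π) = f x}
  one_mem' _ := rfl
  mul_mem' {σ _} hσ hτ x := (hτ (x ∘ σ)).trans (hσ x)
  inv_mem' {σ} hσ x := by
    have hcancel : (x ∘ ⇑σ⁻¹) ∘ σ = x := funext fun i => congrArg x (σ.symm_apply_apply i)
    exact (hσ (x ∘ ⇑σ⁻¹)).symm.trans (congrArg f hcancel)

theorem mem_invarianceGroup {f : (ι → α) → β} {π : Equiv.Perm ι} :
    π ∈ invarianceGroup f ↔ ∀ x, f (x ∘ π) = f x :=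
  Iff.rfl

end InvarianceGroup

section Medial

variable {M : Type*} [Mul M]

/-- The quaternary term operation `(x₀ * x₁) * (x₂ * x₃)` of a magma, whose symmetries under
permutation of the variables are the permuted entropic identities. -/
def mulOfMuls (x : Fin 4 → M) : M :=
  (x 0 * x 1) * (x 2 * x 3)

theorem swap_mem_invarianceGroup_mulOfMuls_iff_medial :
    Equiv.swap (1 : Fin 4) 2 ∈ invarianceGroup (mulOfMuls (M := M)) ↔
      ∀ x y u v : M, (x * y) * (u * v) = (x * u) * (y * v) := by
  have mulOfMuls_swap (x : Fin 4 → M) :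
      mulOfMuls (x ∘ Equiv.swap 1 2) = (x 0 * x 2) * (x 1 * x 3) := rfl
  simp only [mem_invarianceGroup, mulOfMuls_swap]
  exact ⟨fun h x y u v => (h ![x, y, u, v]).symm, fun h x => (h (x 0) (x 1) (x 2) (x 3)).symm⟩

end Medial

/-- If a magma satisfies the permuted-entropic identities for all permutations
in a set `A ⊆ S₄` whose generated subgroup contains the transposition
exchanging the second and third indices, then the magma is medial. -/
theorem stmt_15 {M : Type*} [Mul M] (A : Set (Equiv.Perm (Fin 4)))
    (hA : Equiv.swap (1 : Fin 4) 2 ∈ Subgroup.closure A)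
    (h : ∀ π ∈ A, ∀ x : Fin 4 → M,
      (x 0 * x 1) * (x 2 * x 3) = (x (π 0) * x (π 1)) * (x (π 2) * x (π 3))) :
    ∀ x y u v : M, (x * y) * (u * v) = (x * u) * (y * v) := by
  have closure_le : Subgroup.closure A ≤ invarianceGroup (mulOfMuls (M := M)) :=
    (Subgroup.closure_le _).mpr fun π hπ x => (h π hπ x).symm
  exact swap_mem_invarianceGroup_mulOfMuls_iff_medial.mp (closure_le hA)
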